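/- arXiv:2111.08780 — 5 statements merged into one kernel-verified Lean document; each statement's English description precedes it below -/
import Mathlib

section
/- Let π be a connection schedule of size N and period T, let a ∈ [N] and t ∈ ℤ, and let L, h be integers with 1 ≤ h ≤ L/3. If k is the number of nodes b ∈ [N] with b ≠ a such that the virtual topology contains a path from (a,t) to the timeline of b of latency at most L that uses at most h physical edges, then k ≤ 2·binom(L,h). -/
/-!
The outgoing physical edge of a vertex is unique, so a path from `(a, t)` is a word over `Bool`, and
appending virtual edges to it does not change the timeline it reaches. Padding to length exactly
`L`, every reached timeline comes from a set of at most `h` of the `L` timeslots, those at which a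
physical edge is taken, and there are `∑_{i ≤ h} binom(L, i)` such sets. As long as `3 * h ≤ L + 1`,
the binomial coefficients at least double with each step up to index `h`, so the last term is at
least half of the sum.
-/

open scoped ENNReal

/-- A connection schedule of size `N` and period `T`: a `T`-periodic sequence of
permutations of `[N]`, indexed by timeslots `t : ℤ`. -/
structure ConnSched (N T : ℕ) where
  Tpos : 0 < T
  perm : ℤ → Equiv.Perm (Fin N)
  periodic : ∀ t : ℤ, perm (t + T) = perm t

/-- A path in the virtual topology, encoded by its starting vertex together with the
list of its steps, where `true` denotes traversing the (unique) outgoing physical edge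
and `false` denotes traversing the virtual edge. -/
structure ORNPath (N : ℕ) where
  start : Fin N × ℤ
  steps : List Bool

namespace ORNPath

variable {N T : ℕ}

/-- One step in the virtual topology: from vertex `v`, either follow the physical edge
(`b = true`) to `(π_t v.1, v.2 + 1)`, or the virtual edge (`b = false`) to `(v.1, v.2+1)`. -/
def stepFn (S : ConnSched N T) (v : Fin N × ℤ) (b : Bool) : Fin N × ℤ :=
  (if b then S.perm v.2 v.1 else v.1, v.2 + 1)

/-- The final vertex of a path. -/
def dest (S : ConnSched N T) (P : ORNPath N) : Fin N × ℤ :=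
  P.steps.foldl (stepFn S) P.start

/-- The latency of a path: the total number of (virtual or physical) edges it contains. -/
def latency (P : ORNPath N) : ℕ := P.steps.length

/-- The number of physical edges of a path. -/
def hops (P : ORNPath N) : ℕ := P.steps.count true

/-- The vertex of a path after `k` steps. -/
def vertexAt (S : ConnSched N T) (P : ORNPath N) (k : ℕ) : Fin N × ℤ :=
  (P.steps.take k).foldl (stepFn S) P.start

/-- A physical edge of the virtual topology is identified by the pair
(sending node, timeslot); the receiving node is determined by the schedule.
`P.usesEdge S e` says that path `P` traverses the physical edge `e`. -/
def usesEdge (S : ConnSched N T) (P : ORNPath N) (e : Fin N × ℤ) : Prop :=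
  ∃ k : Fin P.steps.length, P.steps.get k = true ∧ P.vertexAt S k.val = e

/-- Transpose a path by `s` timeslots. -/
def shift (P : ORNPath N) (s : ℤ) : ORNPath N :=
  ⟨(P.start.1, P.start.2 + s), P.steps⟩

end ORNPath

/-- The amount of flow that `f` sends across the physical edge `e`. -/
noncomputable def edgeFlow {N T : ℕ} (S : ConnSched N T) (f : ORNPath N → ℝ≥0∞)
    (e : Fin N × ℤ) : ℝ≥0∞ :=
  ∑' P : {P : ORNPath N // P.usesEdge S e}, f P.val

/-- A flow is feasible if it places at most one unit of flow on every physical edge. -/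
def Feasible {N T : ℕ} (S : ConnSched N T) (f : ORNPath N → ℝ≥0∞) : Prop :=
  ∀ e : Fin N × ℤ, edgeFlow S f e ≤ 1

/-- An ORN design: a connection schedule together with an oblivious routing scheme.
`route a b t` is a unit flow supported on paths from `(a,t)` to the timeline of `b`,
periodic with period `T`. -/
structure ORNDesign (N T : ℕ) where
  sched : ConnSched N T
  route : Fin N → Fin N → ℤ → ORNPath N → ℝ≥0∞
  route_support : ∀ a b t P, route a b t P ≠ 0 →
    P.start = (a, t) ∧ (P.dest sched).1 = b
  route_unit : ∀ a b t, ∑' P : ORNPath N, route a b t P = 1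
  route_periodic : ∀ a b t P, route a b (t + T) (P.shift T) = route a b t P

/-- A demand function `D` (assigning to each timeslot an `N × N` matrix of nonnegative
reals) requests throughput `r` if all row and column sums of every `D t` are at most `r`. -/
def RequestsThroughput {N : ℕ} (D : ℤ → Fin N → Fin N → ℝ) (r : ℝ) : Prop :=
  (∀ t a b, 0 ≤ D t a b) ∧ (∀ t a, ∑ b, D t a b ≤ r) ∧ (∀ t b, ∑ a, D t a b ≤ r)

/-- The flow induced by routing the demand `D` with the routing scheme of `R`. -/
noncomputable def inducedFlow {N T : ℕ} (R : ORNDesign N T)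
    (D : ℤ → Fin N → Fin N → ℝ) (P : ORNPath N) : ℝ≥0∞ :=
  ∑' x : Fin N × Fin N × ℤ,
    ENNReal.ofReal (D x.2.2 x.1 x.2.1) * R.route x.1 x.2.1 x.2.2 P

/-- An ORN design guarantees throughput `r` if the induced flow is feasible for every
demand function requesting throughput at most `r`. -/
def GuaranteesThroughput {N T : ℕ} (R : ORNDesign N T) (r : ℝ) : Prop :=
  ∀ D : ℤ → Fin N → Fin N → ℝ, RequestsThroughput D r →
    Feasible R.sched (inducedFlow R D)

/-- The maximum latency of the ORN design `R` is at most `L`: every path carrying a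
positive amount of flow has latency at most `L`. -/
def MaxLatencyLE {N T : ℕ} (R : ORNDesign N T) (L : ℕ) : Prop :=
  ∀ a b t P, R.route a b t P ≠ 0 → P.latency ≤ L

lemma ORNPath.dest_append_false_fst {N T : ℕ} (S : ConnSched N T) (v : Fin N × ℤ)
    (w : List Bool) : (dest S ⟨v, w ++ [false]⟩).1 = (dest S ⟨v, w⟩).1 := by
  simp [dest, stepFn]

lemma two_mul_choose_le_choose_succ {n k : ℕ} (h : 3 * k + 2 ≤ n) :
    2 * n.choose k ≤ n.choose (k + 1) := by
  refine Nat.le_of_mul_le_mul_right ?_ k.succ_pos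
  calc 2 * n.choose k * (k + 1) = n.choose k * (2 * (k + 1)) := by ring
    _ ≤ n.choose k * (n - k) := by gcongr; omega
    _ = n.choose (k + 1) * (k + 1) := (Nat.choose_succ_right_eq n k).symm

lemma sum_range_succ_choose_le_two_mul {n k : ℕ} (h : 3 * k ≤ n + 1) :
    ∑ i ∈ Finset.range (k + 1), n.choose i ≤ 2 * n.choose k := by
  induction k with
  | zero => simp
  | succ k ih =>
    have hsum := ih (by omega)
    have hdouble : 2 * n.choose k ≤ n.choose (k + 1) :=
      two_mul_choose_le_choose_succ (by omega)
    rw [Finset.sum_range_succ]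
    omega

lemma card_filter_card_le (α : Type*) [Fintype α] (k : ℕ) :
    (Finset.univ.filter fun s : Finset α => s.card ≤ k).card =
      ∑ i ∈ Finset.range (k + 1), (Fintype.card α).choose i := by
  rw [Finset.card_eq_sum_card_fiberwise (f := Finset.card) (t := Finset.range (k + 1))
    fun s hs => by simpa [Nat.lt_succ_iff] using hs]
  refine Finset.sum_congr rfl fun i hi => ?_
  have hfiber : (Finset.univ.filter fun s : Finset α => s.card ≤ k).filter (fun s => s.card = i) =
      Finset.univ.powersetCard i := by
    ext s
    simp only [Finset.mem_filter, Finset.mem_univ, true_and, Finset.mem_powersetCard_univ,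
      Finset.mem_range] at hi ⊢
    omega
  rw [hfiber, Finset.card_powersetCard, Finset.card_univ]

lemma count_ofFn {α : Type*} [DecidableEq α] {n : ℕ} (f : Fin n → α) (a : α) :
    (List.ofFn f).count a = (Finset.univ.filter fun i => f i = a).card := by
  simpa using (Fin.card_filter_univ_eq_vector_get_eq_count a (List.Vector.ofFn f)).symm

/-- The word of length `n` with letter `true` exactly at the positions in `s`; for a path, `s` is
the set of time offsets at which it takes a physical edge. -/
def indicatorWord {n : ℕ} (s : Finset (Fin n)) : List Bool :=
  List.ofFn fun i => decide (i ∈ s)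

lemma indicatorWord_injective (n : ℕ) :
    Function.Injective (indicatorWord : Finset (Fin n) → List Bool) := by
  intro s s' h
  ext i
  simpa using congrFun (List.ofFn_injective h) i

lemma count_true_indicatorWord {n : ℕ} (s : Finset (Fin n)) :
    (indicatorWord s).count true = s.card := by
  simp [indicatorWord, count_ofFn]

lemma image_indicatorWord (n k : ℕ) :
    indicatorWord '' {s : Finset (Fin n) | s.card ≤ k} =
      {w : List Bool | w.length = n ∧ w.count true ≤ k} := by
  ext w
  constructor
  · rintro ⟨s, hs, rfl⟩
    exact ⟨List.length_ofFn, (count_true_indicatorWord s).trans_le hs⟩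
  · rintro ⟨rfl, hw⟩
    have hword : indicatorWord (Finset.univ.filter fun i => w.get i = true) = w := by
      simp [indicatorWord]
    refine ⟨_, ?_, hword⟩
    rwa [Set.mem_ofPred_eq, ← count_true_indicatorWord, hword]

lemma encard_setOf_length_eq_count_true_le (n k : ℕ) :
    {w : List Bool | w.length = n ∧ w.count true ≤ k}.encard =
      (∑ i ∈ Finset.range (k + 1), n.choose i : ℕ) := by
  rw [← image_indicatorWord, (indicatorWord_injective n).encard_image,
    Set.encard_eq_coe_toFinset_card, Set.toFinset_ofPred, card_filter_card_le, Fintype.card_fin]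

lemma apply_rightpad_false {β : Type*} {f : List Bool → β} (hf : ∀ w, f (w ++ [false]) = f w)
    (n : ℕ) (w : List Bool) : f (w.rightpad n false) = f w := by
  have happend (m : ℕ) : f (w ++ List.replicate m false) = f w := by
    induction m with
    | zero => simp
    | succ m ih => rw [List.replicate_succ', ← List.append_assoc, hf, ih]
  exact happend _

lemma image_length_le_subset_image_length_eq {β : Type*} {f : List Bool → β}
    (hf : ∀ w, f (w ++ [false]) = f w) (n k : ℕ) :
    f '' {w | w.length ≤ n ∧ w.count true ≤ k} ⊆ f '' {w | w.length = n ∧ w.count true ≤ k} := by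
  rintro _ ⟨w, ⟨hlen, hcount⟩, rfl⟩
  refine ⟨w.rightpad n false, ⟨?_, ?_⟩, apply_rightpad_false hf n w⟩
  · rw [List.length_rightpad, max_eq_left hlen]
  · simpa [List.rightpad, List.count_replicate] using hcount

/-- `f` stands for the map sending the step list of a path to the timeline it reaches;
`hf` says that a final virtual edge stays on that timeline. -/
theorem counting_lemma_general {β : Type*} {f : List Bool → β} (hf : ∀ w, f (w ++ [false]) = f w)
    {L h : ℕ} (hhL : 3 * h ≤ L + 1) :
    (f '' {w | w.length ≤ L ∧ w.count true ≤ h}).encard ≤ (2 * L.choose h : ℕ) :=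
  calc (f '' {w | w.length ≤ L ∧ w.count true ≤ h}).encard
      ≤ (f '' {w | w.length = L ∧ w.count true ≤ h}).encard :=
        Set.encard_le_encard (image_length_le_subset_image_length_eq hf L h)
    _ ≤ {w : List Bool | w.length = L ∧ w.count true ≤ h}.encard := Set.encard_image_le f _
    _ = (∑ i ∈ Finset.range (h + 1), L.choose i : ℕ) := encard_setOf_length_eq_count_true_le L h
    _ ≤ (2 * L.choose h : ℕ) := Nat.cast_le.mpr (sum_range_succ_choose_le_two_mul hhL)

/-- **Counting Lemma.** For a connection schedule of size `N` and period
`T`, a node `a`, a starting timeslot `t`, and integers `1 ≤ h ≤ L/3`: the number of nodes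
`b ≠ a` reachable from `(a,t)` by a path of latency at most `L` using at most `h`
physical edges is at most `2 * (L choose h)`. -/
theorem counting_lemma {N T : ℕ} (S : ConnSched N T) (a : Fin N) (t : ℤ)
    (L h : ℕ) (hh : 1 ≤ h) (hhL : 3 * h ≤ L) :
    {b : Fin N | b ≠ a ∧ ∃ steps : List Bool, steps.length ≤ L ∧
        steps.count true ≤ h ∧
        (ORNPath.dest S ⟨(a, t), steps⟩).1 = b}.ncard ≤ 2 * L.choose h := by
  have hgen := counting_lemma_general (f := fun w => (ORNPath.dest S ⟨(a, t), w⟩).1)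
    (ORNPath.dest_append_false_fst S (a, t)) (hhL.trans L.le_succ)
  refine (Set.encard_le_coe_iff_finite_ncard_le.mp ((Set.encard_le_encard ?_).trans hgen)).2
  exact fun _ ⟨_, w, hlen, hcount, hdest⟩ => ⟨w, ⟨hlen, hcount⟩, hdest⟩
end

section
/- Let π be a connection schedule of size N and period T, let a ∈ [N] and t ∈ ℤ, and let L ≥ 0 and p ≥ 0 be integers. The number of nodes b ∈ [N] such that the virtual topology contains a path from (a,t) to the timeline of b of latency at most L that uses exactly p physical edges is at most binom(L,p). -/
/-!
The node reached by a path depends only on the path's word of physical and virtual edges. Virtual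
edges do not change the node, so every word of length at most `L` can be padded with virtual edges
to length exactly `L`, keeping both its number of physical edges and the node it reaches. Hence the
reachable nodes are the image of the set of words of length `L` with exactly `p` physical letters,
and Pascal's rule, splitting on the first letter, counts `binom(L, p)` such words.
-/

open scoped ENNReal

/-- The binary words of length `n` with exactly `k` letters `true`; with `true` for a physical and
`false` for a virtual edge, these are the step lists of the paths of latency `n` with `k` hops. -/
def binaryWords (n k : ℕ) : Set (List Bool) :=
  {w | w.length = n ∧ w.count true = k}

theorem binaryWords_zero_right (n : ℕ) : binaryWords n 0 = {List.replicate n false} := by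
  ext w
  refine Iff.trans (and_congr_right fun _ => ?_) List.eq_replicate_iff.symm
  rw [List.count_eq_zero]
  constructor
  · intro htrue b hb
    exact Bool.eq_false_of_not_eq_true fun h => htrue (h ▸ hb)
  · intro hfalse htrue
    exact Bool.noConfusion (hfalse true htrue)

theorem binaryWords_eq_empty_of_lt {n k : ℕ} (h : n < k) : binaryWords n k = ∅ := by
  refine Set.eq_empty_of_forall_notMem ?_
  rintro w ⟨rfl, rfl⟩
  exact h.not_ge List.count_le_length

theorem binaryWords_succ_succ (n k : ℕ) :
    binaryWords (n + 1) (k + 1) =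
      List.cons true '' binaryWords n k ∪ List.cons false '' binaryWords n (k + 1) := by
  ext w
  rcases w with _ | ⟨_ | _, w⟩ <;> simp [binaryWords]

theorem disjoint_image_cons {α : Type*} {a b : α} (hab : a ≠ b) (s t : Set (List α)) :
    Disjoint (List.cons a '' s) (List.cons b '' t) := by
  rw [Set.disjoint_left]
  rintro _ ⟨v, -, rfl⟩ ⟨w, -, hw⟩
  exact hab (List.cons.inj hw).1.symm

theorem encard_binaryWords : ∀ n k : ℕ, (binaryWords n k).encard = n.choose k
  | n, 0 => by simp [binaryWords_zero_right]
  | 0, k + 1 => by simp [binaryWords_eq_empty_of_lt k.succ_pos]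
  | n + 1, k + 1 => by
    rw [binaryWords_succ_succ, Set.encard_union_eq (disjoint_image_cons (by decide) _ _),
      List.cons_injective.encard_image, List.cons_injective.encard_image,
      encard_binaryWords n k, encard_binaryWords n (k + 1), Nat.choose_succ_succ, Nat.cast_add]

theorem apply_foldl_replicate_of_idle {σ β α : Type*} {step : σ → β → σ} {out : σ → α} {b : β}
    (hidle : ∀ s, out (step s b) = out s) (s : σ) (n : ℕ) :
    out ((List.replicate n b).foldl step s) = out s := by
  induction n generalizing s with
  | zero => rfl
  | succ n ih => exact (ih (step s b)).trans (hidle s)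

section IdleLetter

variable {σ α : Type*} {step : σ → Bool → σ} {out : σ → α}

theorem setOf_apply_foldl_eq_image_binaryWords (hidle : ∀ s, out (step s false) = out s)
    (s : σ) (L p : ℕ) :
    {b | ∃ w : List Bool, w.length ≤ L ∧ w.count true = p ∧ out (w.foldl step s) = b} =
      (fun w => out (w.foldl step s)) '' binaryWords L p := by
  ext b
  constructor
  · rintro ⟨w, hlength, hcount, rfl⟩
    refine ⟨w ++ List.replicate (L - w.length) false, ⟨?_, ?_⟩, ?_⟩
    · simp [hlength]
    · simp [hcount, List.count_replicate]
    · simp only [List.foldl_append, apply_foldl_replicate_of_idle hidle]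
  · rintro ⟨w, ⟨hlength, hcount⟩, rfl⟩
    exact ⟨w, hlength.le, hcount, rfl⟩

/-- For a connection schedule, `step` traverses an edge and `out` forgets the timeslot. The bound is
on `Set.encard` because `Set.ncard` is `0` on infinite sets. -/
theorem counting_exact_hops_general (hidle : ∀ s, out (step s false) = out s)
    (s : σ) (L p : ℕ) :
    {b | ∃ w : List Bool, w.length ≤ L ∧ w.count true = p ∧
      out (w.foldl step s) = b}.encard ≤ L.choose p := by
  rw [setOf_apply_foldl_eq_image_binaryWords hidle, ← encard_binaryWords]
  exact Set.encard_image_le _ _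

end IdleLetter

/-- For a connection schedule of size `N` and period `T`, a node `a`,
a starting timeslot `t`, and integers `L, p ≥ 0`: the number of nodes `b` reachable from
`(a,t)` by a path of latency at most `L` using exactly `p` physical edges is at most
`binom(L,p)`. -/
theorem counting_exact_hops {N T : ℕ} (S : ConnSched N T) (a : Fin N) (t : ℤ)
    (L p : ℕ) :
    {b : Fin N | ∃ steps : List Bool, steps.length ≤ L ∧
        steps.count true = p ∧
        (ORNPath.dest S ⟨(a, t), steps⟩).1 = b}.ncard ≤ L.choose p :=
  ENat.toNat_le_of_le_natCast <|
    counting_exact_hops_general (step := ORNPath.stepFn S) (out := Prod.fst) (fun _ => rfl) _ L p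
end

section
/- Let an ORN design on N nodes guarantee throughput r and have maximum latency at most L, and let θ ≥ 2 be an integer with θ − 1 ≤ L/3 and 2·binom(L,θ−1) < N. Then r ≤ (N − 1 + 2·binom(L,θ−1)) / (2θ·(N − 2·binom(L,θ−1))). -/
/-!
The bound is weak linear programming duality. Fix `θ`. At each physical edge, charge a path one unit
if the edge can be entered within `θ - 1` hops from the source of the path, and one more unit if the
destination can be reached within `θ - 1` further hops after the edge (in both cases within latency
`L`). A path of latency at most `L` with at least `θ` hops pays at least `2θ`: one unit at each of
its first `θ` and of its last `θ` physical edges.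

A walk is determined by one endpoint and the list of its physical and virtual steps, so at most
`V = ∑ i < θ, binom(L, i)` nodes are close to a given vertex. Hence the prices charged at a fixed
edge, as a function of source and destination, form a demand with row and column sums at most
`N + V`; rescaled by `r / (N + V)`, it is an admissible demand and loads that edge by at most `1`.
On the other hand, every source has at least `N - V` destinations that force all flow to take at
least `θ` hops. Summing over the edges in a window of `M` timeslots gives
`M N (N - V) 2θ r / (N + V) ≤ N (M + L)`, and `M → ∞` yields `r ≤ (N + V) / (2θ (N - V))`. Finally
`V < 2 binom(L, θ - 1)`, because the coefficients `binom(L, i)` at least double with each `i` up to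
`L / 3`.
-/

open scoped ENNReal

open Finset ORNPath

theorem sum_range_choose_lt_two_mul_choose {n k : ℕ} (h : 3 * k ≤ n + 1) :
    ∑ i ∈ range (k + 1), n.choose i < 2 * n.choose k := by
  induction k with
  | zero => simp
  | succ k ih =>
    have hdouble : 2 * n.choose k ≤ n.choose (k + 1) := by
      refine Nat.le_of_mul_le_mul_right ?_ k.succ_pos
      calc 2 * n.choose k * (k + 1) = n.choose k * (2 * (k + 1)) := by ring
        _ ≤ n.choose k * (n - k) := Nat.mul_le_mul_left _ (by lia)
        _ = n.choose (k + 1) * (k + 1) := (Nat.choose_succ_right_eq n k).symm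
    rw [sum_range_succ]
    lia

theorem card_filter_card_lt (α : Type*) [Fintype α] (m : ℕ) :
    #{s : Finset α | #s < m} = ∑ i ∈ range m, (Fintype.card α).choose i := by
  rw [card_eq_sum_card_fiberwise (f := card) (t := range m) (by simp [Set.MapsTo])]
  refine sum_congr rfl fun i hi => ?_
  rw [← card_univ, ← card_powersetCard, filter_filter]
  congr 1
  ext s
  simp only [mem_filter_univ, mem_powersetCard_univ, and_iff_right_iff_imp]
  rintro rfl
  exact mem_range.1 hi

theorem card_le_sum_choose_of_injOn {α : Type*} {s : Finset α} {f : α → List Bool} {n m : ℕ}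
    (hf : Set.InjOn f s) (hlength : ∀ a ∈ s, (f a).length = n)
    (hcount : ∀ a ∈ s, (f a).count true < m) :
    #s ≤ ∑ i ∈ range m, n.choose i := by
  have hvector : ∀ a ∈ s, ∃ v : List.Vector Bool n, v.toList = f a :=
    fun a ha => ⟨⟨f a, hlength a ha⟩, rfl⟩
  choose! v hv using hvector
  let support (a : α) : Finset (Fin n) := {i | (v a).get i = true}
  have hsupport : Set.InjOn support s := fun a ha b hb h => hf ha hb <| by
    rw [← hv a ha, ← hv b hb]
    congr 1
    exact List.Vector.ext fun i => Bool.eq_iff_iff.2 (by simpa [support] using Finset.ext_iff.1 h i)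
  calc #s ≤ #{t : Finset (Fin n) | #t < m} := by
        refine card_le_card_of_injOn support (fun a ha => ?_) hsupport
        simpa [support, Fin.card_filter_univ_eq_vector_get_eq_count, hv a ha] using hcount a ha
    _ = ∑ i ∈ range m, n.choose i := by rw [card_filter_card_lt, Fintype.card_fin]

theorem le_one_of_forall_natCast_mul_le_add {K : Type*} [CommRing K] [LinearOrder K]
    [IsStrictOrderedRing K] [Archimedean K] {x C : K} (h : ∀ n : ℕ, n * x ≤ n + C) : x ≤ 1 := by
  by_contra! hx
  obtain ⟨n, hn⟩ := Archimedean.arch (C + 1) (sub_pos.2 hx)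
  rw [nsmul_eq_mul] at hn
  linarith [h n]

namespace ConnSched

variable {N T : ℕ} (S : ConnSched N T)

theorem foldl_stepFn_snd (l : List Bool) (v : Fin N × ℤ) :
    (l.foldl (stepFn S) v).2 = v.2 + l.length := by
  induction l generalizing v with
  | nil => simp
  | cons x l ih => rw [List.foldl_cons, ih, stepFn, List.length_cons]; push_cast; ring

theorem foldl_stepFn_replicate_false_fst (n : ℕ) (v : Fin N × ℤ) :
    ((List.replicate n false).foldl (stepFn S) v).1 = v.1 := by
  induction n generalizing v with
  | zero => rfl
  | succ n ih => rw [List.replicate_succ, List.foldl_cons, ih]; rfl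

theorem stepFn_injective (b : Bool) : Function.Injective fun v => stepFn S v b := by
  rintro ⟨a, t⟩ ⟨a', t'⟩ h
  obtain rfl : t = t' := add_right_cancel (congrArg Prod.snd h)
  cases b <;> simpa [stepFn] using h

theorem foldl_stepFn_injective (l : List Bool) : Function.Injective (l.foldl (stepFn S)) := by
  induction l with
  | nil => exact Function.injective_id
  | cons x l ih => exact ih.comp (S.stepFn_injective x)

/-- Reachability in the virtual topology: some path from `v` to `w` has latency at most `L` and
fewer than `θ` hops. -/
def Reaches (L θ : ℕ) (v w : Fin N × ℤ) : Prop :=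
  ∃ l : List Bool, l.length ≤ L ∧ l.count true < θ ∧ l.foldl (stepFn S) v = w

/-- Reachability of the timeline of `b` from `v` with latency at most `L` and fewer than `θ`
hops. -/
def ReachesTimeline (L θ : ℕ) (v : Fin N × ℤ) (b : Fin N) : Prop :=
  ∃ t : ℤ, S.Reaches L θ v (b, t)

variable {S}

theorem ReachesTimeline.exists_length_eq {L θ : ℕ} {v : Fin N × ℤ} {b : Fin N}
    (h : S.ReachesTimeline L θ v b) :
    ∃ l : List Bool, l.length = L ∧ l.count true < θ ∧ (l.foldl (stepFn S) v).1 = b := by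
  obtain ⟨t, l, hlength, hcount, hl⟩ := h
  refine ⟨l ++ List.replicate (L - l.length) false, ?_, ?_, ?_⟩
  · simp [hlength]
  · simpa [List.count_replicate] using hcount
  · rw [List.foldl_append, foldl_stepFn_replicate_false_fst, hl]

variable (S)

open Classical in
theorem card_reachesTimeline_le (L θ : ℕ) (v : Fin N × ℤ) :
    #{b | S.ReachesTimeline L θ v b} ≤ ∑ i ∈ range θ, L.choose i := by
  have hlist := fun b (hb : b ∈ ({b | S.ReachesTimeline L θ v b} : Finset (Fin N))) =>
    (mem_filter.1 hb).2.exists_length_eq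
  choose! f hlength hcount hf using hlist
  refine card_le_sum_choose_of_injOn (fun b hb b' hb' h => ?_) hlength hcount
  rw [← hf b hb, ← hf b' hb', h]

open Classical in
theorem card_reaches_le (L θ : ℕ) (t : ℤ) (e : Fin N × ℤ) :
    #{a | S.Reaches L θ (a, t) e} ≤ ∑ i ∈ range θ, L.choose i := by
  rcases eq_empty_or_nonempty ({a | S.Reaches L θ (a, t) e} : Finset (Fin N)) with hs | ⟨a₀, ha₀⟩
  · simp [hs]
  have hlist := fun a (ha : a ∈ ({a | S.Reaches L θ (a, t) e} : Finset (Fin N))) =>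
    (mem_filter.1 ha).2
  choose! f hlength hcount hf using hlist
  have htime : ∀ a ∈ ({a | S.Reaches L θ (a, t) e} : Finset (Fin N)),
      (f a).length = (e.2 - t).toNat := fun a ha => by
    have := S.foldl_stepFn_snd (f a) (a, t)
    rw [hf a ha] at this
    simp [this]
  refine (card_le_sum_choose_of_injOn (fun a ha a' ha' h => ?_) htime hcount).trans
    (sum_le_sum fun i _ => Nat.choose_le_choose i (htime a₀ ha₀ ▸ hlength a₀ ha₀))
  have : (f a).foldl (stepFn S) (a, t) = (f a).foldl (stepFn S) (a', t) := by
    rw [hf a ha, h, hf a' ha']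
  exact congrArg Prod.fst (S.foldl_stepFn_injective _ this)

open Classical in
/-- The dual variables of the routing linear program: the price that flow from `v` to the timeline
of `b` pays at the edge `e`. One unit is due if `e` can be entered within `θ - 1` hops from `v`, and
one if `b` can be reached within `θ - 1` further hops after `e`. -/
noncomputable def edgePrice (L θ : ℕ) (e v : Fin N × ℤ) (b : Fin N) : ℕ :=
  (if S.Reaches L θ v e then 1 else 0) +
    if S.ReachesTimeline L θ (stepFn S e true) b then 1 else 0

theorem sum_edgePrice_destinations_le (L θ : ℕ) (e v : Fin N × ℤ) :
    ∑ b, S.edgePrice L θ e v b ≤ N + ∑ i ∈ range θ, L.choose i := by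
  classical
  simp only [edgePrice, sum_add_distrib, ← card_filter]
  exact add_le_add ((card_le_univ _).trans_eq (Fintype.card_fin N))
    (S.card_reachesTimeline_le L θ _)

theorem sum_edgePrice_sources_le (L θ : ℕ) (e : Fin N × ℤ) (t : ℤ) (b : Fin N) :
    ∑ a, S.edgePrice L θ e (a, t) b ≤ N + ∑ i ∈ range θ, L.choose i := by
  classical
  simp only [edgePrice, sum_add_distrib, ← card_filter]
  rw [add_comm]
  exact add_le_add ((card_le_univ _).trans_eq (Fintype.card_fin N))
    (S.card_reaches_le L θ t e)

theorem requestsThroughput_edgePrice (L θ : ℕ) (e : Fin N × ℤ) {c : ℝ} (hc : 0 ≤ c) :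
    RequestsThroughput (fun t a b => c * S.edgePrice L θ e (a, t) b)
      (c * (N + ∑ i ∈ range θ, (L.choose i : ℝ))) := by
  refine ⟨fun t a b => by positivity, fun t a => ?_, fun t b => ?_⟩ <;> rw [← mul_sum] <;> gcongr
  · exact_mod_cast S.sum_edgePrice_destinations_le L θ e (a, t)
  · exact_mod_cast S.sum_edgePrice_sources_le L θ e t b

open Classical in
theorem card_mul_le_card_not_reachesTimeline (L θ : ℕ) (I : Finset ℤ) :
    N * #I * (N - ∑ i ∈ range θ, L.choose i) ≤
      #{x ∈ (univ ×ˢ univ ×ˢ I : Finset (Fin N × Fin N × ℤ)) |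
        ¬ S.ReachesTimeline L θ (x.1, x.2.2) x.2.1} := by
  have hfar (v : Fin N × ℤ) :
      N - ∑ i ∈ range θ, L.choose i ≤ #{b | ¬ S.ReachesTimeline L θ v b} := by
    have hcompl := card_filter_add_card_filter_not (s := univ) (S.ReachesTimeline L θ v)
    rw [card_univ, Fintype.card_fin] at hcompl
    have := S.card_reachesTimeline_le L θ v
    lia
  calc N * #I * (N - ∑ i ∈ range θ, L.choose i)
      = ∑ _a : Fin N, ∑ _t ∈ I, (N - ∑ i ∈ range θ, L.choose i) := by simp [mul_assoc]
    _ ≤ ∑ a : Fin N, ∑ t ∈ I, #{b | ¬ S.ReachesTimeline L θ (a, t) b} :=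
        sum_le_sum fun a _ => sum_le_sum fun t _ => hfar (a, t)
    _ = _ := by
        simp only [card_filter, sum_product]
        exact sum_congr rfl fun a _ => sum_comm

end ConnSched

namespace ORNPath

variable {N T : ℕ} (S : ConnSched N T) (P : ORNPath N)

theorem vertexAt_snd {j : ℕ} (hj : j ≤ P.steps.length) :
    (P.vertexAt S j).2 = P.start.2 + j := by
  rw [vertexAt, S.foldl_stepFn_snd, List.length_take_of_le hj]

theorem vertexAt_injOn : Set.InjOn (P.vertexAt S) (Set.Iic P.steps.length) := by
  intro i hi j hj h
  have htime := congrArg Prod.snd h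
  rw [P.vertexAt_snd S hi, P.vertexAt_snd S hj] at htime
  lia

variable {S P} in
theorem usesEdge.time_mem_Ico {e : Fin N × ℤ} (h : P.usesEdge S e) :
    e.2 ∈ Set.Ico P.start.2 (P.start.2 + P.latency) := by
  obtain ⟨⟨j, hj⟩, -, rfl⟩ := h
  rw [P.vertexAt_snd S hj.le, latency, Set.mem_Ico]
  lia

/-- The `i`-th physical edge of a path, counting from `0`; meaningful for `i < P.hops`. -/
def hopEdge (i : ℕ) : Fin N × ℤ :=
  P.vertexAt S (P.steps.idxOfNth true i)

variable {P}

theorem hopEdge_injOn : Set.InjOn (P.hopEdge S) (Set.Iio P.hops) := by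
  intro i hi j _ h
  exact (List.idxOfNth_eq_idxOfNth_iff_of_left_lt_count hi).1
    (P.vertexAt_injOn S List.idxOfNth_le_length List.idxOfNth_le_length h)

theorem exists_steps_eq_append_true_cons {i : ℕ} (hi : i < P.hops) :
    ∃ l₁ l₂ : List Bool, P.steps = l₁ ++ true :: l₂ ∧ l₁.count true = i ∧
      l₁.foldl (stepFn S) P.start = P.hopEdge S i := by
  have hlt := List.idxOfNth_lt_length_of_lt_count hi
  refine ⟨P.steps.take (P.steps.idxOfNth true i), P.steps.drop (P.steps.idxOfNth true i + 1),
    ?_, ?_, rfl⟩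
  · conv_lhs => rw [← List.take_append_drop (P.steps.idxOfNth true i) P.steps,
      List.drop_eq_getElem_cons hlt, List.getElem_idxOfNth_eq]
  · rw [← List.countBefore_eq_count_take, List.countBefore_idxOfNth_of_lt_count hi]

theorem usesEdge_hopEdge {i : ℕ} (hi : i < P.hops) : P.usesEdge S (P.hopEdge S i) :=
  ⟨⟨P.steps.idxOfNth true i, List.idxOfNth_lt_length_of_lt_count hi⟩,
    List.getElem_idxOfNth_eq, rfl⟩

theorem reaches_hopEdge {L θ i : ℕ} (hL : P.latency ≤ L) (hi : i < P.hops) (hθ : i < θ) :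
    S.Reaches L θ P.start (P.hopEdge S i) := by
  obtain ⟨l₁, l₂, hsteps, hcount, hwalk⟩ := P.exists_steps_eq_append_true_cons S hi
  rw [latency, hsteps, List.length_append] at hL
  exact ⟨l₁, by lia, by lia, hwalk⟩

theorem reachesTimeline_dest {L θ i : ℕ} (hL : P.latency ≤ L) (hi : i < P.hops)
    (hθ : P.hops ≤ i + θ) :
    S.ReachesTimeline L θ (stepFn S (P.hopEdge S i) true) (P.dest S).1 := by
  obtain ⟨l₁, l₂, hsteps, hcount, hwalk⟩ := P.exists_steps_eq_append_true_cons S hi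
  rw [latency, hsteps, List.length_append, List.length_cons] at hL
  rw [hops, hsteps, List.count_append, List.count_cons_self] at hθ
  refine ⟨(P.dest S).2, l₂, by lia, by lia, ?_⟩
  rw [← hwalk, dest, hsteps, List.foldl_append, List.foldl_cons]

variable {S} {W : Finset (Fin N × ℤ)}

open Classical in
theorem card_le_card_filter_usesEdge_and {I : Finset ℕ} {p : Fin N × ℤ → Prop}
    (hW : ∀ e, P.usesEdge S e → e ∈ W) (hI : ∀ i ∈ I, i < P.hops)
    (hp : ∀ i ∈ I, p (P.hopEdge S i)) :
    #I ≤ #{e ∈ W | P.usesEdge S e ∧ p e} := by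
  refine card_le_card_of_injOn (P.hopEdge S) (fun i hi => ?_)
    ((P.hopEdge_injOn S).mono fun i hi => hI i hi)
  have huses := P.usesEdge_hopEdge S (hI i hi)
  simp [hW _ huses, huses, hp i hi]

open Classical in
theorem two_mul_le_sum_edgePrice {L θ : ℕ} (hL : P.latency ≤ L) (hθ : θ ≤ P.hops)
    (hW : ∀ e, P.usesEdge S e → e ∈ W) :
    2 * θ ≤ ∑ e ∈ W with P.usesEdge S e,
      S.edgePrice L θ e P.start (P.dest S).1 := by
  have hfirst := card_le_card_filter_usesEdge_and (I := range θ) (p := S.Reaches L θ P.start) hW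
    (fun i hi => (mem_range.1 hi).trans_le hθ)
    (fun i hi => P.reaches_hopEdge S hL ((mem_range.1 hi).trans_le hθ) (mem_range.1 hi))
  have hlast := card_le_card_filter_usesEdge_and (I := Ico (P.hops - θ) P.hops)
    (p := fun e => S.ReachesTimeline L θ (stepFn S e true) (P.dest S).1) hW
    (fun i hi => (mem_Ico.1 hi).2)
    (fun i hi => P.reachesTimeline_dest S hL (mem_Ico.1 hi).2
      (Nat.sub_le_iff_le_add.1 (mem_Ico.1 hi).1))
  rw [card_range] at hfirst
  rw [Nat.card_Ico, Nat.sub_sub_self hθ] at hlast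
  simp only [ConnSched.edgePrice, sum_add_distrib, ← card_filter, filter_filter]
  lia

end ORNPath

namespace ORNDesign

variable {N T : ℕ} (R : ORNDesign N T)

theorem le_tsum_route_mul {a b : Fin N} {t : ℤ} {w : ℝ≥0∞} {f : ORNPath N → ℝ≥0∞}
    (hw : ∀ P, R.route a b t P ≠ 0 → w ≤ f P) : w ≤ ∑' P, R.route a b t P * f P := by
  calc w = ∑' P, R.route a b t P * w := by rw [ENNReal.tsum_mul_right, R.route_unit, one_mul]
    _ ≤ ∑' P, R.route a b t P * f P := ENNReal.tsum_le_tsum fun P => by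
      by_cases hP : R.route a b t P = 0
      · simp [hP]
      · gcongr
        exact hw P hP

open Classical in
theorem edgeFlow_inducedFlow (D : ℤ → Fin N → Fin N → ℝ) (e : Fin N × ℤ) :
    edgeFlow R.sched (inducedFlow R D) e =
      ∑' x : Fin N × Fin N × ℤ, ∑' P : ORNPath N, R.route x.1 x.2.1 x.2.2 P *
        if P.usesEdge R.sched e then ENNReal.ofReal (D x.2.2 x.1 x.2.1) else 0 := by
  rw [ENNReal.tsum_comm]
  refine (tsum_subtype {P : ORNPath N | P.usesEdge R.sched e} (inducedFlow R D)).trans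
    (tsum_congr fun P => ?_)
  by_cases hP : P.usesEdge R.sched e <;> simp [hP, inducedFlow, mul_comm]

open Classical in
theorem sum_edgeFlow_inducedFlow (D : Fin N × ℤ → ℤ → Fin N → Fin N → ℝ)
    (W : Finset (Fin N × ℤ)) :
    ∑ e ∈ W, edgeFlow R.sched (inducedFlow R (D e)) e =
      ∑' x : Fin N × Fin N × ℤ, ∑' P : ORNPath N, R.route x.1 x.2.1 x.2.2 P *
        ∑ e ∈ W with P.usesEdge R.sched e, ENNReal.ofReal (D e x.2.2 x.1 x.2.1) := by
  simp only [edgeFlow_inducedFlow, sum_filter, mul_sum,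
    Summable.tsum_finsetSum fun _ _ => ENNReal.summable]

variable {R} {r : ℝ}

open Classical in
-- Weak LP duality: the price functions `D e` of the edges are themselves admissible demands.
theorem card_mul_le_card_of_guaranteesThroughput (hr : GuaranteesThroughput R r)
    {D : Fin N × ℤ → ℤ → Fin N → Fin N → ℝ} (hD : ∀ e, RequestsThroughput (D e) r)
    (W : Finset (Fin N × ℤ)) {U : Finset (Fin N × Fin N × ℤ)} {w : ℝ}
    (hw : ∀ a b t, (a, b, t) ∈ U → ∀ P, R.route a b t P ≠ 0 →
      w ≤ ∑ e ∈ W with P.usesEdge R.sched e, D e t a b) :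
    #U * w ≤ #W := by
  rw [← ENNReal.ofReal_le_natCast, ENNReal.ofReal_mul (by positivity), ENNReal.ofReal_natCast,
    ← nsmul_eq_mul]
  calc #U • ENNReal.ofReal w
      ≤ ∑ x ∈ U, ∑' P : ORNPath N, R.route x.1 x.2.1 x.2.2 P *
          ∑ e ∈ W with P.usesEdge R.sched e, ENNReal.ofReal (D e x.2.2 x.1 x.2.1) := by
        refine card_nsmul_le_sum U _ _ fun x hx => R.le_tsum_route_mul fun P hP => ?_
        rw [← ENNReal.ofReal_sum_of_nonneg fun e _ => (hD e).1 _ _ _]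
        exact ENNReal.ofReal_le_ofReal (hw _ _ _ hx P hP)
    _ ≤ ∑ e ∈ W, edgeFlow R.sched (inducedFlow R (D e)) e := by
        rw [sum_edgeFlow_inducedFlow]
        exact ENNReal.sum_le_tsum U
    _ ≤ #W := by
        simpa using sum_le_card_nsmul W _ 1 fun e _ => hr (D e) (hD e) e

theorem le_hops_of_not_reachesTimeline {L θ : ℕ} (hL : MaxLatencyLE R L) {a b : Fin N} {t : ℤ}
    (hfar : ¬ R.sched.ReachesTimeline L θ (a, t) b) {P : ORNPath N} (hP : R.route a b t P ≠ 0) :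
    θ ≤ P.hops := by
  obtain ⟨hstart, hdest⟩ := R.route_support a b t P hP
  by_contra! hlt
  refine hfar ⟨(P.dest R.sched).2, P.steps, hL a b t P hP, hlt, ?_⟩
  rw [← hstart, ← hdest, dest]

open Classical in
theorem two_mul_le_sum_edgePrice {L θ : ℕ} (hL : MaxLatencyLE R L) {a b : Fin N} {t : ℤ}
    {W : Finset (Fin N × ℤ)} (hW : ∀ e : Fin N × ℤ, e.2 ∈ Set.Ico t (t + L) → e ∈ W)
    (hfar : ¬ R.sched.ReachesTimeline L θ (a, t) b) {P : ORNPath N} (hP : R.route a b t P ≠ 0) :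
    2 * θ ≤ ∑ e ∈ W with P.usesEdge R.sched e, R.sched.edgePrice L θ e (a, t) b := by
  obtain ⟨hstart, rfl⟩ := R.route_support a b t P hP
  have hlatency := hL _ _ _ P hP
  rw [← hstart]
  refine ORNPath.two_mul_le_sum_edgePrice hlatency (le_hops_of_not_reachesTimeline hL hfar hP)
    fun e he => hW e ?_
  have htime := he.time_mem_Ico
  rw [hstart] at htime
  exact ⟨htime.1, htime.2.trans_le (by simpa using hlatency)⟩

-- The commodities originate in the timeslots `[0, M)`, so their paths stay within `[0, M + L)`.
theorem window_mul_le_of_guaranteesThroughput {L θ : ℕ} {c : ℝ} (hc : 0 ≤ c)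
    (hr : GuaranteesThroughput R (c * (N + ∑ i ∈ range θ, (L.choose i : ℝ))))
    (hL : MaxLatencyLE R L) (M : ℕ) :
    ((N * M * (N - ∑ i ∈ range θ, L.choose i) : ℕ) : ℝ) * (c * (2 * θ)) ≤ N * (M + L) := by
  classical
  let W : Finset (Fin N × ℤ) := univ ×ˢ Ico 0 (M + L : ℤ)
  let U : Finset (Fin N × Fin N × ℤ) :=
    {x ∈ univ ×ˢ univ ×ˢ Ico (0 : ℤ) M | ¬ R.sched.ReachesTimeline L θ (x.1, x.2.2) x.2.1}
  have hU : N * M * (N - ∑ i ∈ range θ, L.choose i) ≤ #U := by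
    simpa using R.sched.card_mul_le_card_not_reachesTimeline L θ (Ico (0 : ℤ) M)
  have hW : #W = N * (M + L) := by
    rw [card_product, card_univ, Fintype.card_fin, Int.card_Ico, sub_zero]
    norm_cast
  have hprice : ∀ a b t, (a, b, t) ∈ U → ∀ P, R.route a b t P ≠ 0 →
      c * (2 * θ) ≤ ∑ e ∈ W with ORNPath.usesEdge R.sched P e,
        c * (R.sched.edgePrice L θ e (a, t) b : ℝ) := fun a b t hx P hP => by
    obtain ⟨ht, hfar⟩ := mem_filter.1 hx
    simp only [mem_product, mem_univ, mem_Ico, true_and] at ht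
    rw [← mul_sum]
    gcongr
    exact_mod_cast two_mul_le_sum_edgePrice hL
      (fun e he => by simp only [mem_product, mem_univ, mem_Ico, Set.mem_Ico, W] at he ⊢; lia)
      hfar hP
  calc ((N * M * (N - ∑ i ∈ range θ, L.choose i) : ℕ) : ℝ) * (c * (2 * θ))
      ≤ #U * (c * (2 * θ)) := by gcongr
    _ ≤ #W := card_mul_le_card_of_guaranteesThroughput hr
        (fun e => R.sched.requestsThroughput_edgePrice L θ e hc) W hprice
    _ = N * (M + L) := mod_cast hW

theorem mul_le_one_of_guaranteesThroughput {L θ : ℕ} {c : ℝ} (hc : 0 ≤ c)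
    (hr : GuaranteesThroughput R (c * (N + ∑ i ∈ range θ, (L.choose i : ℝ))))
    (hL : MaxLatencyLE R L) (hN : ∑ i ∈ range θ, L.choose i < N) :
    c * (2 * θ * (N - ∑ i ∈ range θ, (L.choose i : ℝ))) ≤ 1 := by
  refine le_one_of_forall_natCast_mul_le_add (C := L) fun M => ?_
  have hwindow := window_mul_le_of_guaranteesThroughput hc hr hL M
  push_cast [Nat.cast_sub hN.le] at hwindow
  refine le_of_mul_le_mul_left (hwindow.trans_eq' ?_) (Nat.cast_pos.2 (Nat.zero_lt_of_lt hN))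
  ring

end ORNDesign

theorem throughput_upper_bound_general {N T : ℕ} (R : ORNDesign N T) (r : ℝ)
    (hr : GuaranteesThroughput R r) (L : ℕ) (hL : MaxLatencyLE R L) (θ : ℕ) (hθ : 0 < θ)
    (hN : ∑ i ∈ range θ, L.choose i < N) :
    r ≤ (N + ∑ i ∈ range θ, (L.choose i : ℝ)) /
      (2 * θ * (N - ∑ i ∈ range θ, (L.choose i : ℝ))) := by
  have hN' : ∑ i ∈ range θ, (L.choose i : ℝ) < N := mod_cast hN
  set V := ∑ i ∈ range θ, (L.choose i : ℝ)
  have hV0 : 0 ≤ V := by positivity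
  have hnum : 0 < N + V := by linarith
  have hden : 0 < 2 * θ * (N - V) := mul_pos (by positivity) (sub_pos.2 hN')
  rcases le_or_gt r 0 with hr0 | hr0
  · exact hr0.trans (by positivity)
  have hscale : r / (N + V) * (N + V) = r := div_mul_cancel₀ r hnum.ne'
  have hle := ORNDesign.mul_le_one_of_guaranteesThroughput (θ := θ) (c := r / (N + V))
    (by positivity) (hscale.symm ▸ hr) hL hN
  rw [le_div_iff₀ hden]
  rwa [div_mul_eq_mul_div, div_le_one hnum] at hle

/-- If an ORN design on `N` nodes guarantees throughput `r` and has
maximum latency at most `L`, and `θ ≥ 2` is an integer with `θ − 1 ≤ L/3` and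
`2·binom(L,θ−1) < N`, then `r ≤ (N − 1 + 2·binom(L,θ−1)) / (2θ·(N − 2·binom(L,θ−1)))`. -/
theorem throughput_upper_bound {N T : ℕ} (R : ORNDesign N T) (r : ℝ)
    (hr : GuaranteesThroughput R r) (L : ℕ) (hL : MaxLatencyLE R L)
    (θ : ℕ) (hθ : 2 ≤ θ) (hθL : 3 * (θ - 1) ≤ L)
    (hbinom : 2 * L.choose (θ - 1) < N) :
    r ≤ ((N : ℝ) - 1 + 2 * L.choose (θ - 1)) /
        (2 * θ * ((N : ℝ) - 2 * L.choose (θ - 1))) := by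
  have hsum := sum_range_choose_lt_two_mul_choose (hθL.trans L.le_succ)
  rw [Nat.sub_add_cancel (by lia)] at hsum
  have hsum' : ∑ i ∈ range θ, (L.choose i : ℝ) + 1 ≤ 2 * L.choose (θ - 1) := mod_cast hsum
  have hbinom' : (2 * L.choose (θ - 1) : ℝ) < N := mod_cast hbinom
  refine (throughput_upper_bound_general R r hr L hL θ (by lia) (hsum.trans hbinom)).trans ?_
  have := sub_pos.2 hbinom'
  have hsum0 : 0 ≤ ∑ i ∈ range θ, (L.choose i : ℝ) := by positivity
  gcongr ?_ / (2 * θ * ?_) <;> linarith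
end

section
/- For every integer ℓ ≥ 1 and every integer n ≥ 2, setting N = n^ℓ and T = ℓ(n−1), there exists an ORN design on N nodes with period T that guarantees throughput 1/(2ℓ) and has maximum latency at most 2ℓ(n−1). -/
open scoped ENNReal

/-!
Nodes are identified with a finite abelian group `G`, and every permutation of the schedule is a
translation. Suppose there is a rule that moves a packet by any prescribed `d : G` within one
period, deciding in each timeslot from `d` alone whether to take the physical edge. Route from `a`
to `b` by moving first by a uniformly random `d` and then by the remaining `b - a - d`, which is
uniform as well. For a fixed `d`, the packet's position after `k` steps is a translate of its
start, so for each of the `T` values of `k` only one start node and start time lead to a given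
physical edge. Hence each phase loads an edge by at most `r T c / |G|`, where `r` bounds the row
sums (first phase) or the column sums (second phase, parametrized by its endpoint) of the demand
and `c` is the number of `d` that take the edge's timeslot.

The elementary basis scheme is this construction for `G = (ℤ/n)^ℓ`: each of the `ℓ(n-1)` timeslots
adds a different nonzero multiple `s • e_p` of a basis vector, and a packet moving by `d` takes it
iff `d p = s`. Then `c = n ^ (ℓ-1)`, and with `r = 1/(2ℓ)` the two phases load every edge by at
most `2 r ℓ (n-1) / n < 1`.
-/

theorem sum_range_intCast_add {M : Type*} [AddCommMonoid M] {T : ℕ} [NeZero T] (f : ZMod T → M)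
    (t : ℤ) : ∑ j ∈ Finset.range T, f ((t + j : ℤ) : ZMod T) = ∑ u, f u :=
  Finset.sum_nbij' (fun j : ℕ => ((t + j : ℤ) : ZMod T)) (fun u => (u - t).val)
    (fun _ _ => Finset.mem_univ _) (fun u _ => Finset.mem_range.2 (ZMod.val_lt _))
    (fun j hj => by simp [ZMod.val_natCast_of_lt (Finset.mem_range.1 hj)]) (fun u _ => by simp)
    (fun _ _ => rfl)

theorem tsum_encard_setOf_comm {α β : Type*} (r : α → β → Prop) :
    ∑' a, ({b | r a b}.encard : ℝ≥0∞) = ∑' b, ({a | r a b}.encard : ℝ≥0∞) := by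
  simp_rw [← ENNReal.tsum_set_one, tsum_subtype _ fun _ => (1 : ℝ≥0∞)]
  exact ENNReal.tsum_comm

namespace ORNPath

variable {N T : ℕ} {S : ConnSched N T}

theorem shift_injective (s : ℤ) : Function.Injective fun P : ORNPath N => P.shift s := by
  rintro ⟨⟨a, t⟩, L⟩ ⟨⟨b, u⟩, M⟩ h
  simpa [shift] using h

theorem usesEdge_cons {v e : Fin N × ℤ} {b : Bool} {L : List Bool} :
    usesEdge S ⟨v, b :: L⟩ e ↔ (b = true ∧ v = e) ∨ usesEdge S ⟨stepFn S v b, L⟩ e := by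
  simp only [usesEdge, vertexAt]
  exact Fin.exists_fin_succ

theorem usesEdge_append {v e : Fin N × ℤ} {L₁ L₂ : List Bool} :
    usesEdge S ⟨v, L₁ ++ L₂⟩ e ↔
      usesEdge S ⟨v, L₁⟩ e ∨ usesEdge S ⟨dest S ⟨v, L₁⟩, L₂⟩ e := by
  induction L₁ generalizing v with
  | nil => simp [usesEdge, dest]
  | cons b L ih => rw [List.cons_append, usesEdge_cons, usesEdge_cons, ih, or_assoc]; rfl

end ORNPath

section Demand

variable {N T : ℕ} {D : ℤ → Fin N → Fin N → ℝ} {r : ℝ}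

theorem edgeFlow_inducedFlow (R : ORNDesign N T) (D : ℤ → Fin N → Fin N → ℝ) (e : Fin N × ℤ) :
    edgeFlow R.sched (inducedFlow R D) e =
      ∑' x : Fin N × Fin N × ℤ, ENNReal.ofReal (D x.2.2 x.1 x.2.1) *
        edgeFlow R.sched (R.route x.1 x.2.1 x.2.2) e := by
  simp only [edgeFlow, inducedFlow, ← ENNReal.tsum_mul_left]
  exact ENNReal.tsum_comm

theorem RequestsThroughput.transpose (hD : RequestsThroughput D r) :
    RequestsThroughput (fun t a b => D t b a) r :=
  ⟨fun t a b => hD.1 t b a, hD.2.2, hD.2.1⟩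

theorem RequestsThroughput.tsum_mul_source_le (hD : RequestsThroughput D r)
    (g : Fin N × ℤ → ℝ≥0∞) :
    ∑' x : Fin N × Fin N × ℤ, ENNReal.ofReal (D x.2.2 x.1 x.2.1) * g (x.1, x.2.2) ≤
      ENNReal.ofReal r * ∑' y, g y := by
  have row_le (t : ℤ) (a : Fin N) : ∑' b, ENNReal.ofReal (D t a b) ≤ ENNReal.ofReal r := by
    rw [tsum_fintype, ← ENNReal.ofReal_sum_of_nonneg fun b _ => hD.1 t a b]
    exact ENNReal.ofReal_le_ofReal (hD.2.1 t a)
  calc ∑' x : Fin N × Fin N × ℤ, ENNReal.ofReal (D x.2.2 x.1 x.2.1) * g (x.1, x.2.2)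
      = ∑' (a) (t), (∑' b, ENNReal.ofReal (D t a b)) * g (a, t) := by
        simp_rw [ENNReal.tsum_prod', ← ENNReal.tsum_mul_right]
        exact tsum_congr fun a => ENNReal.tsum_comm
    _ ≤ ∑' (a) (t), ENNReal.ofReal r * g (a, t) := by
        gcongr with a t
        exact row_le t a
    _ = ENNReal.ofReal r * ∑' y, g y := by
        simp_rw [ENNReal.tsum_mul_left, ENNReal.tsum_prod']

theorem RequestsThroughput.tsum_mul_target_le (hD : RequestsThroughput D r)
    (g : Fin N × ℤ → ℝ≥0∞) :
    ∑' x : Fin N × Fin N × ℤ, ENNReal.ofReal (D x.2.2 x.1 x.2.1) * g (x.2.1, x.2.2) ≤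
      ENNReal.ofReal r * ∑' y, g y := by
  refine le_of_eq_of_le ?_ (hD.transpose.tsum_mul_source_le g)
  simp_rw [ENNReal.tsum_prod']
  exact ENNReal.tsum_comm

end Demand

/-- A rule for moving packets by translations of an abelian group `G` with period `T`. Timeslots
enter only through their residues modulo `T`: the physical edges of timeslot `u` add `jump u`, and a
packet that has to move by `d` takes its edge iff `takes d u`; over one period this moves it
by `d`. -/
structure TranslationRule (G : Type*) [AddCommGroup G] (T : ℕ) [NeZero T] where
  jump : ZMod T → G
  takes : G → ZMod T → Bool
  sum_jump : ∀ d, ∑ u, (if takes d u then jump u else 0) = d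

namespace TranslationRule

variable {G : Type*} [AddCommGroup G] {N T : ℕ} [NeZero T] (A : TranslationRule G T)
  (φ : Fin N ≃ G)

/-- How far a packet that has to move by `d` from time `t` on has moved after `k` steps. -/
def displacement (d : G) (t : ℤ) (k : ℕ) : G :=
  ∑ j ∈ Finset.range k, if A.takes d (t + j : ℤ) then A.jump (t + j : ℤ) else 0

theorem displacement_period (d : G) (t : ℤ) : A.displacement d t T = d :=
  (sum_range_intCast_add (fun u => if A.takes d u then A.jump u else 0) t).trans (A.sum_jump d)

/-- The connection schedule whose permutations are the translations by `A.jump`, on nodes labelled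
by `φ`. -/
def sched : ConnSched N T where
  Tpos := NeZero.pos T
  perm t := φ.symm.permCongr (Equiv.addRight (A.jump t))
  periodic t := by simp

/-- The first `k` steps, from time `t` on, of a packet that has to move by `d`. -/
def steps (d : G) (t : ℤ) (k : ℕ) : List Bool :=
  (List.range k).map fun j : ℕ => A.takes d (t + j : ℤ)

theorem steps_add_period (d : G) (t : ℤ) (k : ℕ) : A.steps d (t + T) k = A.steps d t k := by
  simp [steps]

theorem length_steps (d : G) (t : ℤ) (k : ℕ) : (A.steps d t k).length = k := by
  simp [steps]

theorem foldl_steps (d : G) (a : Fin N) (t : ℤ) (k : ℕ) :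
    (A.steps d t k).foldl (ORNPath.stepFn (A.sched φ)) (a, t) =
      (φ.symm (φ a + A.displacement d t k), t + k) := by
  induction k with
  | zero => simp [steps, displacement]
  | succ k ih =>
    rw [steps, List.range_succ, List.map_append, List.foldl_append, ← steps, ih, displacement,
      displacement, Finset.sum_range_succ]
    cases h : A.takes d (t + k : ℤ) <;>
      simp_all [ORNPath.stepFn, sched, add_assoc]

/-- The path that leaves the vertex `x` and moves by `d` during one period. -/
def semiPath (d : G) (x : Fin N × ℤ) : ORNPath N :=
  ⟨x, A.steps d x.2 T⟩

theorem usesEdge_semiPath {d : G} {x e : Fin N × ℤ}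
    (h : (A.semiPath d x).usesEdge (A.sched φ) e) :
    A.takes d e.2 = true ∧ ∃ k < T, x.2 + k = e.2 ∧ φ x.1 + A.displacement d x.2 k = φ e.1 := by
  obtain ⟨⟨k, hk⟩, htakes, rfl⟩ := h
  have hk : k < T := by simpa [semiPath, length_steps] using hk
  have hvertex : (A.semiPath d x).vertexAt (A.sched φ) k =
      (φ.symm (φ x.1 + A.displacement d x.2 k), x.2 + k) := by
    rw [← foldl_steps, ORNPath.vertexAt, semiPath, steps, ← List.map_take, List.take_range,
      min_eq_left hk.le, steps]
  simp only [hvertex, Equiv.apply_symm_apply]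
  exact ⟨by simpa [semiPath, steps] using htakes, k, hk, rfl, rfl⟩

/-- After a given number of steps, the edge determines the start time and the start node. -/
theorem encard_usesEdge_semiPath_le (d : G) (e : Fin N × ℤ) :
    {x : Fin N × ℤ | (A.semiPath d x).usesEdge (A.sched φ) e}.encard ≤
      if A.takes d e.2 then T else 0 := by
  split_ifs with htakes
  · let start (k : ℕ) : Fin N × ℤ :=
      (φ.symm (φ e.1 - A.displacement d (e.2 - k) k), e.2 - k)
    calc _ ≤ (start '' Finset.range T).encard := by
          refine Set.encard_le_encard fun x hx => ?_
          obtain ⟨-, k, hk, htime, hnode⟩ := A.usesEdge_semiPath φ hx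
          refine ⟨k, Finset.mem_coe.2 (Finset.mem_range.2 hk), ?_⟩
          simp [start, ← htime, ← hnode]
      _ ≤ T := (Set.encard_image_le _ _).trans <| by
          rw [Set.encard_coe_eq_coe_finsetCard, Finset.card_range]
  · rw [Nat.cast_zero, nonpos_iff_eq_zero, Set.encard_eq_zero, Set.eq_empty_iff_forall_notMem]
    exact fun x hx => htakes (A.usesEdge_semiPath φ hx).1

/-- The path from `(a, t)` to `b` that moves by `d` during one period and by the remaining
`b - a - d` during the next. -/
def twoPhasePath (a b : Fin N) (t : ℤ) (d : G) : ORNPath N :=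
  ⟨(a, t), A.steps d t T ++ A.steps (φ b - φ a - d) (t + T) T⟩

theorem twoPhasePath_dest (a b : Fin N) (t : ℤ) (d : G) :
    ((A.twoPhasePath φ a b t d).dest (A.sched φ)).1 = b := by
  simp [twoPhasePath, ORNPath.dest, foldl_steps, displacement_period]

theorem twoPhasePath_add_period (a b : Fin N) (t : ℤ) (d : G) :
    A.twoPhasePath φ a b (t + T) d = (A.twoPhasePath φ a b t d).shift T := by
  simp [twoPhasePath, ORNPath.shift, steps_add_period]

/-- The vertex at which a packet from time `t` to the target `b` enters its second phase if it moves
by `d` in that phase, as a function of `(b, t)`. -/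
def secondPhaseStart (T : ℕ) (φ : Fin N ≃ G) (d : G) : Fin N × ℤ ≃ Fin N × ℤ :=
  (φ.symm.permCongr (Equiv.subRight d)).prodCongr (Equiv.addRight (T : ℤ))

theorem usesEdge_twoPhasePath {a b : Fin N} {t : ℤ} {d : G} {e : Fin N × ℤ} :
    (A.twoPhasePath φ a b t d).usesEdge (A.sched φ) e ↔
      (A.semiPath d (a, t)).usesEdge (A.sched φ) e ∨
      (A.semiPath (φ b - φ a - d) (secondPhaseStart T φ (φ b - φ a - d) (b, t))).usesEdge
        (A.sched φ) e := by
  rw [twoPhasePath, ORNPath.usesEdge_append, ORNPath.dest, foldl_steps, displacement_period]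
  have hnode : φ b - (φ b - φ a - d) = φ a + d := by abel
  simp [semiPath, secondPhaseStart, Equiv.permCongr_apply, hnode]

theorem encard_usesEdge_twoPhasePath_le (a b : Fin N) (t : ℤ) (e : Fin N × ℤ) :
    {d | (A.twoPhasePath φ a b t d).usesEdge (A.sched φ) e}.encard ≤
      {d | (A.semiPath d (a, t)).usesEdge (A.sched φ) e}.encard +
      {d | (A.semiPath d (secondPhaseStart T φ d (b, t))).usesEdge (A.sched φ) e}.encard := by
  rw [← Set.encard_preimage_of_bijective (Equiv.subLeft (φ b - φ a)).bijective
    {d | (A.semiPath d (secondPhaseStart T φ d (b, t))).usesEdge (A.sched φ) e}]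
  simp_rw [usesEdge_twoPhasePath, Set.ofPred_or]
  exact Set.encard_union_le _ _

variable [Fintype G]

theorem tsum_encard_usesEdge_semiPath_le (σ : G → Fin N × ℤ ≃ Fin N × ℤ) (e : Fin N × ℤ) :
    ∑' x, ({d | (A.semiPath d (σ d x)).usesEdge (A.sched φ) e}.encard : ℝ≥0∞) ≤
      T * Finset.card {d | A.takes d e.2} := by
  rw [tsum_encard_setOf_comm, tsum_fintype]
  calc ∑ d, ({x | (A.semiPath d (σ d x)).usesEdge (A.sched φ) e}.encard : ℝ≥0∞)
      ≤ ∑ d, if A.takes d e.2 then (T : ℝ≥0∞) else 0 := by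
        gcongr with d
        have h := A.encard_usesEdge_semiPath_le φ d e
        rw [← Set.encard_preimage_of_bijective (σ d).bijective] at h
        refine (ENat.toENNReal_mono h).trans_eq ?_
        split_ifs <;> simp
    _ = T * Finset.card {d | A.takes d e.2} := by
        rw [← Finset.sum_filter, Finset.sum_const, nsmul_eq_mul, mul_comm]

/-- Two-phase routing on the schedule of `A` through a uniformly distributed intermediate node. -/
noncomputable def design : ORNDesign N T where
  sched := A.sched φ
  route a b t := (PMF.uniformOfFintype G).map (A.twoPhasePath φ a b t)
  route_support a b t P hP := by
    obtain ⟨d, -, rfl⟩ := (PMF.mem_support_map_iff _ _ _).1 hP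
    exact ⟨rfl, A.twoPhasePath_dest φ a b t d⟩
  route_unit a b t := PMF.tsum_coe _
  route_periodic a b t P := by
    classical
    simp_rw [PMF.map_apply, twoPhasePath_add_period, (ORNPath.shift_injective (T : ℤ)).eq_iff]

theorem maxLatencyLE_design : MaxLatencyLE (A.design φ) (2 * T) := by
  intro a b t P hP
  obtain ⟨d, -, rfl⟩ := (PMF.mem_support_map_iff _ _ _).1 hP
  simp [ORNPath.latency, twoPhasePath, length_steps, two_mul]

theorem edgeFlow_design_route (a b : Fin N) (t : ℤ) (e : Fin N × ℤ) :
    edgeFlow (A.sched φ) ((A.design φ).route a b t) e =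
      {d | (A.twoPhasePath φ a b t d).usesEdge (A.sched φ) e}.encard / Fintype.card G := by
  classical
  calc edgeFlow (A.sched φ) ((A.design φ).route a b t) e
      = ((PMF.uniformOfFintype G).map (A.twoPhasePath φ a b t)).toOuterMeasure
          {P | P.usesEdge (A.sched φ) e} := by
        rw [PMF.toOuterMeasure_apply, ← tsum_subtype]; rfl
    _ = _ := by
        rw [PMF.toOuterMeasure_map_apply, PMF.toOuterMeasure_uniformOfFintype_apply,
          Set.preimage_ofPred_eq, ← Set.coe_fintypeCard, ENat.toENNReal_coe]

theorem edgeFlow_inducedFlow_design_le {D : ℤ → Fin N → Fin N → ℝ} {r : ℝ}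
    (hD : RequestsThroughput D r) (e : Fin N × ℤ) :
    edgeFlow (A.sched φ) (inducedFlow (A.design φ) D) e ≤
      2 * (ENNReal.ofReal r * (T * Finset.card {d | A.takes d e.2})) / Fintype.card G := by
  let firstLoad : Fin N × ℤ → ℝ≥0∞ := fun x =>
    {d | (A.semiPath d x).usesEdge (A.sched φ) e}.encard
  let secondLoad : Fin N × ℤ → ℝ≥0∞ := fun x =>
    {d | (A.semiPath d (secondPhaseStart T φ d x)).usesEdge (A.sched φ) e}.encard
  calc edgeFlow (A.sched φ) (inducedFlow (A.design φ) D) e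
      = ∑' x : Fin N × Fin N × ℤ, ENNReal.ofReal (D x.2.2 x.1 x.2.1) *
          edgeFlow (A.sched φ) ((A.design φ).route x.1 x.2.1 x.2.2) e :=
        edgeFlow_inducedFlow (A.design φ) D e
    _ ≤ ∑' x : Fin N × Fin N × ℤ, ENNReal.ofReal (D x.2.2 x.1 x.2.1) *
          ((firstLoad (x.1, x.2.2) + secondLoad (x.2.1, x.2.2)) / Fintype.card G) := by
        gcongr with x
        rw [edgeFlow_design_route]
        gcongr
        rw [← ENat.toENNReal_add]
        exact ENat.toENNReal_mono (A.encard_usesEdge_twoPhasePath_le φ x.1 x.2.1 x.2.2 e)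
    _ = (∑' x : Fin N × Fin N × ℤ, ENNReal.ofReal (D x.2.2 x.1 x.2.1) * firstLoad (x.1, x.2.2) +
          ∑' x : Fin N × Fin N × ℤ, ENNReal.ofReal (D x.2.2 x.1 x.2.1) *
            secondLoad (x.2.1, x.2.2)) /
            Fintype.card G := by
        simp_rw [← ENNReal.tsum_add, ← mul_add, div_eq_mul_inv, ← mul_assoc, ENNReal.tsum_mul_right]
    _ ≤ (ENNReal.ofReal r * ∑' y, firstLoad y + ENNReal.ofReal r * ∑' y, secondLoad y) /
          Fintype.card G := by
        gcongr
        exacts [hD.tsum_mul_source_le firstLoad, hD.tsum_mul_target_le secondLoad]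
    _ ≤ 2 * (ENNReal.ofReal r * (T * Finset.card {d | A.takes d e.2})) / Fintype.card G := by
        rw [two_mul]
        gcongr
        exacts [A.tsum_encard_usesEdge_semiPath_le φ (fun _ => Equiv.refl _) e,
          A.tsum_encard_usesEdge_semiPath_le φ (secondPhaseStart T φ) e]

theorem guaranteesThroughput_design {r : ℝ}
    (hr : ∀ u, 2 * T * Finset.card {d | A.takes d u} * r ≤ Fintype.card G) :
    GuaranteesThroughput (A.design φ) r := by
  intro D hD e
  refine (A.edgeFlow_inducedFlow_design_le φ hD e).trans (ENNReal.div_le_of_le_mul ?_)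
  have h := ENNReal.ofReal_le_ofReal (hr e.2)
  rw [ENNReal.ofReal_mul (by positivity), ENNReal.ofReal_natCast] at h
  calc 2 * (ENNReal.ofReal r * (T * Finset.card {d | A.takes d e.2}))
      = 2 * T * Finset.card {d | A.takes d e.2} * ENNReal.ofReal r := by ring
    _ ≤ 1 * Fintype.card G := by
      rw [one_mul]
      exact_mod_cast h

end TranslationRule

section ElementaryBasis

variable {ι K : Type*} [Fintype ι] [DecidableEq ι] [AddCommGroup K] [Fintype K] [DecidableEq K]
  {T : ℕ} [NeZero T]

/-- The elementary basis scheme on `ι → K`: each timeslot of a period is assigned by `slot` its own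
pair of a coordinate `p` and a nonzero `s`, and a packet that has to move by `d` takes its edge iff
`d p = s`. -/
def elementaryBasisRule (slot : ZMod T ≃ ι × {s : K // s ≠ 0}) : TranslationRule (ι → K) T where
  jump u := Pi.single (slot u).1 (slot u).2
  takes d u := d (slot u).1 = (slot u).2
  sum_jump d := by
    have sum_coordinate (p : ι) :
        (∑ s : {s : K // s ≠ 0}, if d p = s then Pi.single p (s : K) else 0) =
          (Pi.single p (d p) : ι → K) := by
      have h := Fintype.sum_eq_add_sum_subtype_ne
        (fun s => if d p = s then (Pi.single p s : ι → K) else 0) 0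
      simpa using h.symm
    simp only [decide_eq_true_eq]
    rw [slot.sum_comp fun x => if d x.1 = x.2 then (Pi.single x.1 (x.2 : K) : ι → K) else 0,
      Fintype.sum_prod_type]
    simp only [sum_coordinate, Finset.univ_sum_single]

theorem card_mul_card_takes_elementaryBasisRule (slot : ZMod T ≃ ι × {s : K // s ≠ 0})
    (u : ZMod T) :
    Fintype.card K * Finset.card {d | (elementaryBasisRule slot).takes d u} =
      Fintype.card (ι → K) := by
  have h := Fintype.card_filter_piFinset_const_eq_of_mem (Finset.univ : Finset K)
    (slot u).1 (Finset.mem_univ ((slot u).2 : K))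
  simp only [Fintype.piFinset_univ, Finset.card_univ] at h
  have : Nonempty ι := ⟨(slot u).1⟩
  simp [elementaryBasisRule, h, mul_pow_sub_one Fintype.card_ne_zero]

theorem guaranteesThroughput_elementaryBasisRule {N : ℕ} (slot : ZMod T ≃ ι × {s : K // s ≠ 0})
    (φ : Fin N ≃ (ι → K)) :
    GuaranteesThroughput ((elementaryBasisRule slot).design φ) (1 / (2 * Fintype.card ι)) := by
  refine (elementaryBasisRule slot).guaranteesThroughput_design φ fun u => ?_
  set c := Finset.card {d | (elementaryBasisRule slot).takes d u}
  have hι : (Fintype.card ι : ℝ) ≠ 0 :=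
    have : Nonempty ι := ⟨(slot u).1⟩
    Nat.cast_ne_zero.2 Fintype.card_ne_zero
  have hT : T = Fintype.card ι * Fintype.card {s : K // s ≠ 0} := by
    rw [← ZMod.card T, Fintype.card_congr slot, Fintype.card_prod]
  calc 2 * (T : ℝ) * c * (1 / (2 * Fintype.card ι))
      = Fintype.card {s : K // s ≠ 0} * c := by rw [hT]; push_cast; field_simp
    _ ≤ Fintype.card K * c := by gcongr; exact Fintype.card_subtype_le _
    _ = Fintype.card (ι → K) := by
      exact_mod_cast card_mul_card_takes_elementaryBasisRule slot u

end ElementaryBasis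

/-- **EBS.** For every integer `ℓ ≥ 1` and every integer `n ≥ 2`, with
`N = n^ℓ` and `T = ℓ(n−1)`, there exists an ORN design on `N` nodes with period `T` that
guarantees throughput `1/(2ℓ)` and has maximum latency at most `2ℓ(n−1)`. -/
theorem ebs_exists (ℓ n : ℕ) (hℓ : 1 ≤ ℓ) (hn : 2 ≤ n) :
    ∃ R : ORNDesign (n ^ ℓ) (ℓ * (n - 1)),
      GuaranteesThroughput R (1 / (2 * ℓ)) ∧ MaxLatencyLE R (2 * ℓ * (n - 1)) := by
  have : NeZero n := ⟨by omega⟩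
  have : NeZero (ℓ * (n - 1)) := ⟨(Nat.mul_pos hℓ (by omega)).ne'⟩
  let φ : Fin (n ^ ℓ) ≃ (Fin ℓ → ZMod n) := Fintype.equivOfCardEq (by simp)
  let slot : ZMod (ℓ * (n - 1)) ≃ Fin ℓ × {s : ZMod n // s ≠ 0} :=
    Fintype.equivOfCardEq (by simp [Fintype.card_subtype_compl])
  refine ⟨(elementaryBasisRule slot).design φ, ?_, ?_⟩
  · simpa only [Fintype.card_fin] using guaranteesThroughput_elementaryBasisRule slot φ
  · rw [mul_assoc]
    exact (elementaryBasisRule slot).maxLatencyLE_design φ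
end

section
/- For every integer ℓ ≥ 1 and every integer n ≥ 2, setting N = n^ℓ and T = ℓ(n−1), there exist a connection schedule of size N and period T and an assignment to each triple (t,a,b) ∈ ℤ×[N]×[N] of a single path (a 'semi-path') in the virtual topology from (a,t) to the timeline of b of latency at most T, such that for every physical edge e of the virtual topology, the set of triples (t,a,b) whose semi-path traverses e is finite and has cardinality exactly T·n^{ℓ−1}. -/
/-!
If a path crosses a physical edge exactly in the timeslots `s` with `u s`, where `u` is fixed, then
after `k` steps it has moved its starting node by a permutation. So, whatever the schedule is, for
every `u` that is true at `τ` and every `k < L` exactly one path of `L` steps with pattern `u`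
crosses a given physical edge of timeslot `τ` as its `(k + 1)`-st step. If the paths out of each
`(a, t)` have patterns labelled by `ι`, each label leading to a different destination, then a
physical edge of timeslot `τ` is used by `L` times as many paths as there are labels whose pattern
is true at `τ`.

For the schedule of the theorem, identify the nodes with `(ℤ/n)^ℓ` and the timeslots modulo
`T = ℓ (n - 1)` with pairs of a coordinate `i` and a nonzero residue `s`; such a timeslot translates
by `s` in coordinate `i`. The path from `a` to `b` has label `d = b - a` and moves in the slot
`(i, s)` iff `d i = s`, so that over one period its moves add up to `d`. The labels moving in a
given slot have one coordinate prescribed, so there are `n ^ (ℓ - 1)` of them.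
-/

open scoped ENNReal

section Patterns

variable {N T : ℕ}

/-- The steps of a path of latency `L` that starts in timeslot `t` and crosses a physical edge
exactly in the timeslots `s` with `u s`; the hop pattern `u` is indexed by absolute time. -/
def ORNPath.patternSteps (u : ℤ → Bool) (t : ℤ) (L : ℕ) : List Bool :=
  (List.range L).map fun k : ℕ => u (t + k)

/-- The permutation of the nodes effected by `k` steps from timeslot `t` with hop pattern `u`. -/
def ConnSched.transport (S : ConnSched N T) (u : ℤ → Bool) (t : ℤ) : ℕ → Equiv.Perm (Fin N)
  | 0 => 1
  | k + 1 => (if u (t + k) then S.perm (t + k) else 1) * S.transport u t k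

namespace ORNPath

lemma length_patternSteps (u : ℤ → Bool) (t : ℤ) (L : ℕ) : (patternSteps u t L).length = L := by
  simp [patternSteps]

lemma patternSteps_succ (u : ℤ → Bool) (t : ℤ) (k : ℕ) :
    patternSteps u t (k + 1) = patternSteps u t k ++ [u (t + k)] := by
  simp [patternSteps, List.range_succ]

lemma take_patternSteps (u : ℤ → Bool) (t : ℤ) {k L : ℕ} (hk : k ≤ L) :
    (patternSteps u t L).take k = patternSteps u t k := by
  simp [patternSteps, ← List.map_take, List.take_range, hk]

lemma foldl_stepFn_patternSteps (S : ConnSched N T) (u : ℤ → Bool) (a : Fin N) (t : ℤ) (k : ℕ) :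
    (patternSteps u t k).foldl (stepFn S) (a, t) = (S.transport u t k a, t + k) := by
  induction k with
  | zero => simp [patternSteps, ConnSched.transport]
  | succ k ih =>
    rw [patternSteps_succ, List.foldl_append, ih]
    cases h : u (t + k) <;> simp [stepFn, ConnSched.transport, h, add_assoc]

lemma usesEdge_patternSteps_iff (S : ConnSched N T) (u : ℤ → Bool) (a : Fin N) (t : ℤ) (L : ℕ)
    (e : Fin N × ℤ) :
    usesEdge S ⟨(a, t), patternSteps u t L⟩ e ↔
      u e.2 = true ∧ ∃ k < L, S.transport u t k a = e.1 ∧ t + k = e.2 := by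
  have step_iff (k : Fin (patternSteps u t L).length) :
      (patternSteps u t L).get k = true ∧ vertexAt S ⟨(a, t), patternSteps u t L⟩ k = e ↔
        u e.2 = true ∧ S.transport u t k a = e.1 ∧ t + k = e.2 := by
    have hk : (k : ℕ) ≤ L := k.2.le.trans_eq (length_patternSteps u t L)
    rw [vertexAt, take_patternSteps u t hk, foldl_stepFn_patternSteps, Prod.ext_iff]
    refine and_congr_left fun hv => ?_
    rw [List.get_eq_getElem, ← hv.2]
    simp [patternSteps]
  simp only [usesEdge, step_iff, Fin.exists_iff, length_patternSteps, exists_prop]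
  tauto

end ORNPath

variable {ι : Type*} (S : ConnSched N T) (u : ι → ℤ → Bool) (label : Fin N → Fin N ≃ ι) (L : ℕ)
  (e : Fin N × ℤ)

/-- The source and destination, with starting time, of the path with hop pattern `u y.2` that
arrives at the edge `e` after `y.1` steps. -/
def ConnSched.routeThrough (y : ℕ × ι) : ℤ × Fin N × Fin N :=
  let a := (S.transport (u y.2) (e.2 - y.1) y.1).symm e.1
  (e.2 - y.1, a, (label a).symm y.2)

lemma ConnSched.routeThrough_injective : Function.Injective (S.routeThrough u label e) := by
  rintro ⟨k, i⟩ ⟨k', i'⟩ h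
  simp only [routeThrough, Prod.mk.injEq] at h
  obtain ⟨ht, ha, hb⟩ := h
  rw [ha] at hb
  exact Prod.ext (by omega) ((label _).symm.injective hb)

lemma ConnSched.setOf_usesEdge_eq_image :
    {x : ℤ × Fin N × Fin N | ORNPath.usesEdge S
        ⟨(x.2.1, x.1), ORNPath.patternSteps (u (label x.2.1 x.2.2)) x.1 L⟩ e} =
      S.routeThrough u label e '' (Set.Iio L ×ˢ {i | u i e.2 = true}) := by
  ext ⟨t, a, b⟩
  simp only [Set.mem_ofPred_eq, ORNPath.usesEdge_patternSteps_iff, Set.mem_image, Prod.exists,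
    Set.mem_prod, Set.mem_Iio]
  constructor
  · rintro ⟨hu, k, hk, ha, ht⟩
    refine ⟨k, label a b, ⟨hk, hu⟩, ?_⟩
    simp [routeThrough, ← ha, ← ht]
  · rintro ⟨k, i, ⟨hk, hu⟩, h⟩
    simp only [routeThrough, Prod.mk.injEq] at h
    obtain ⟨rfl, rfl, rfl⟩ := h
    simp only [Equiv.apply_symm_apply]
    exact ⟨hu, k, hk, Equiv.apply_symm_apply .., by omega⟩

lemma ConnSched.finite_setOf_usesEdge :
    {x : ℤ × Fin N × Fin N | ORNPath.usesEdge S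
      ⟨(x.2.1, x.1), ORNPath.patternSteps (u (label x.2.1 x.2.2)) x.1 L⟩ e}.Finite := by
  have : Finite ι := .of_equiv _ (label e.1)
  rw [S.setOf_usesEdge_eq_image]
  exact ((Set.finite_Iio L).prod (Set.toFinite _)).image _

lemma ConnSched.ncard_setOf_usesEdge :
    {x : ℤ × Fin N × Fin N | ORNPath.usesEdge S
      ⟨(x.2.1, x.1), ORNPath.patternSteps (u (label x.2.1 x.2.2)) x.1 L⟩ e}.ncard =
      L * {i | u i e.2 = true}.ncard := by
  rw [S.setOf_usesEdge_eq_image, Set.ncard_image_of_injective _ (S.routeThrough_injective ..),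
    Set.ncard_prod, Set.ncard_Iio_nat]

end Patterns

section Translations

variable {N T : ℕ} [NeZero T] {V : Type*} [AddCommGroup V]

/-- The schedule that translates by `g t` in timeslot `t`, for nodes numbered by the elements of
an additive group `V`. -/
def ConnSched.ofTranslations (g : ZMod T → V) (node : V ≃ Fin N) : ConnSched N T where
  Tpos := NeZero.pos T
  perm t := node.permCongr (Equiv.addRight (g t))
  periodic t := by simp

lemma ConnSched.transport_ofTranslations (g : ZMod T → V) (node : V ≃ Fin N) (u : ℤ → Bool)
    (t : ℤ) (k : ℕ) (a : Fin N) :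
    (ofTranslations g node).transport u t k a =
      node (node.symm a + ∑ j ∈ Finset.range k, if u (t + j) then g (t + j) else 0) := by
  induction k with
  | zero => simp [transport]
  | succ k ih =>
    rw [transport, Equiv.Perm.mul_apply, ih, Finset.sum_range_succ]
    cases h : u (t + k) <;> simp [ofTranslations, add_assoc]

end Translations

lemma sum_range_add_natCast_zmod {T : ℕ} [NeZero T] {M : Type*} [AddCommMonoid M]
    (f : ZMod T → M) (x : ZMod T) : ∑ k ∈ Finset.range T, f (x + k) = ∑ y, f y := by
  rw [← Equiv.sum_comp (Equiv.addLeft x) f]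
  refine Finset.sum_nbij' (fun k => (k : ZMod T)) ZMod.val (by simp) ?_ ?_ (by simp) (by simp)
  · exact fun y _ => Finset.mem_range.2 y.val_lt
  · exact fun k hk => ZMod.val_cast_of_lt (Finset.mem_range.1 hk)

lemma sum_ite_eq_single_ne_zero {ι G : Type*} [Fintype ι] [DecidableEq ι] [AddCommMonoid G]
    [Fintype G] [DecidableEq G] (d : ι → G) :
    ∑ x : ι × {s : G // s ≠ 0}, (if d x.1 = x.2 then Pi.single x.1 (x.2 : G) else 0) = d := by
  have sum_coord (i : ι) :
      ∑ s : {s : G // s ≠ 0}, (if d i = s then Pi.single i (s : G) else 0) =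
        (Pi.single i (d i) : ι → G) := by
    rw [← Finset.sum_subtype (p := (· ≠ 0)) {s | s ≠ 0} (by simp)
        fun s => if d i = s then (Pi.single i s : ι → G) else 0,
      Finset.sum_filter_of_ne, Finset.sum_ite_eq]
    · simp
    · rintro s - h rfl
      simp at h
  rw [Fintype.sum_prod_type, Finset.sum_congr rfl fun i _ => sum_coord i, Finset.univ_sum_single]

lemma ncard_setOf_apply_eq {ι G : Type*} [Fintype ι] [Fintype G] (i : ι) (s : G) :
    {d : ι → G | d i = s}.ncard = Fintype.card G ^ (Fintype.card ι - 1) := by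
  classical
  rw [← Finset.card_univ (α := G),
    ← Fintype.card_filter_piFinset_const_eq_of_mem _ i (Finset.mem_univ s),
    ← Set.ncard_coe_finset]
  simp

namespace EBS

variable {N T : ℕ} {ι G : Type*} [DecidableEq G]

/-- The schedule of the elementary basis scheme (EBS): `slot` labels the timeslots modulo `T` by
pairs `(i, s)` of a coordinate and a nonzero element, and such a timeslot translates by `s` in
coordinate `i`. -/
def sched [NeZero T] [DecidableEq ι] [AddCommGroup G] (slot : ZMod T ≃ ι × {s : G // s ≠ 0})
    (node : (ι → G) ≃ Fin N) : ConnSched N T :=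
  .ofTranslations (fun x => Pi.single (slot x).1 (slot x).2) node

/-- The hop pattern of the semi-paths with displacement `d`. -/
def pattern [Zero G] (slot : ZMod T ≃ ι × {s : G // s ≠ 0}) (d : ι → G) (t : ℤ) : Bool :=
  d (slot t).1 = (slot t).2

/-- The displacement `d = b - a` from the node `a`, as a numbering of the nodes `b`. -/
def displacement [AddCommGroup G] (node : (ι → G) ≃ Fin N) (a : Fin N) : Fin N ≃ (ι → G) :=
  node.symm.trans (Equiv.subRight (node.symm a))

lemma transport_sched_period [NeZero T] [DecidableEq ι] [Finite ι] [AddCommGroup G] [Finite G]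
    (slot : ZMod T ≃ ι × {s : G // s ≠ 0}) (node : (ι → G) ≃ Fin N) (d : ι → G) (t : ℤ)
    (a : Fin N) : (sched slot node).transport (pattern slot d) t T a = node (node.symm a + d) := by
  cases nonempty_fintype ι
  cases nonempty_fintype G
  rw [sched, ConnSched.transport_ofTranslations]
  congr 2
  calc _ = ∑ x : ZMod T,
        if d (slot x).1 = (slot x).2 then (Pi.single (slot x).1 (slot x).2 : ι → G) else 0 := by
        rw [← sum_range_add_natCast_zmod _ (t : ZMod T)]
        simp [pattern]
    _ = d := by
        rw [slot.sum_comp fun x => if d x.1 = x.2 then (Pi.single x.1 (x.2 : G) : ι → G) else 0,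
          sum_ite_eq_single_ne_zero]

lemma fst_dest_displacement [NeZero T] [DecidableEq ι] [Finite ι] [AddCommGroup G] [Finite G]
    (slot : ZMod T ≃ ι × {s : G // s ≠ 0}) (node : (ι → G) ≃ Fin N) (t : ℤ) (a b : Fin N) :
    (ORNPath.dest (sched slot node) ⟨(a, t),
      ORNPath.patternSteps (pattern slot (displacement node a b)) t T⟩).1 = b := by
  rw [ORNPath.dest, ORNPath.foldl_stepFn_patternSteps, transport_sched_period]
  simp [displacement]

lemma ncard_setOf_pattern [Fintype ι] [Zero G] [Fintype G]
    (slot : ZMod T ≃ ι × {s : G // s ≠ 0}) (t : ℤ) :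
    {d | pattern slot d t = true}.ncard = Fintype.card G ^ (Fintype.card ι - 1) := by
  simp only [pattern, decide_eq_true_eq, ncard_setOf_apply_eq]

end EBS

/-- For every `ℓ ≥ 1` and `n ≥ 2`, with `N = n^ℓ` and `T = ℓ(n−1)`,
there exist a connection schedule of size `N` and period `T` and an assignment, to each
triple `(t,a,b)`, of a single semi-path from `(a,t)` to the timeline of `b` of latency at
most `T`, such that for every physical edge `e` the set of triples whose semi-path
traverses `e` is finite of cardinality exactly `T·n^{ℓ−1}`. -/
theorem ebs_semipath_counting (ℓ n : ℕ) (hℓ : 1 ≤ ℓ) (hn : 2 ≤ n) :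
    ∃ (S : ConnSched (n ^ ℓ) (ℓ * (n - 1)))
      (sp : ℤ → Fin (n ^ ℓ) → Fin (n ^ ℓ) → List Bool),
      (∀ (t : ℤ) (a b : Fin (n ^ ℓ)),
        (sp t a b).length ≤ ℓ * (n - 1) ∧
        (ORNPath.dest S ⟨(a, t), sp t a b⟩).1 = b) ∧
      (∀ e : Fin (n ^ ℓ) × ℤ,
        {x : ℤ × Fin (n ^ ℓ) × Fin (n ^ ℓ) |
            ORNPath.usesEdge S ⟨(x.2.1, x.1), sp x.1 x.2.1 x.2.2⟩ e}.Finite ∧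
        {x : ℤ × Fin (n ^ ℓ) × Fin (n ^ ℓ) |
            ORNPath.usesEdge S ⟨(x.2.1, x.1), sp x.1 x.2.1 x.2.2⟩ e}.ncard
          = ℓ * (n - 1) * n ^ (ℓ - 1)) := by
  have : NeZero n := ⟨by omega⟩
  have : NeZero (ℓ * (n - 1)) := ⟨(Nat.mul_pos hℓ (by omega)).ne'⟩
  have slot : ZMod (ℓ * (n - 1)) ≃ Fin ℓ × {s : ZMod n // s ≠ 0} :=
    Fintype.equivOfCardEq (by simp [ZMod.card, Fintype.card_subtype_compl])
  have node : (Fin ℓ → ZMod n) ≃ Fin (n ^ ℓ) := Fintype.equivOfCardEq (by simp [ZMod.card])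
  refine ⟨EBS.sched slot node, fun t a b =>
      ORNPath.patternSteps (EBS.pattern slot (EBS.displacement node a b)) t (ℓ * (n - 1)),
    fun t a b => ⟨(ORNPath.length_patternSteps ..).le, EBS.fst_dest_displacement slot node t a b⟩,
    fun e => ⟨ConnSched.finite_setOf_usesEdge .., ?_⟩⟩
  rw [ConnSched.ncard_setOf_usesEdge, EBS.ncard_setOf_pattern, ZMod.card, Fintype.card_fin]
end
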